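/- Let k ≥ 1, let G₁,…,G_k ⊆ ℝ^d be finite sets, and let H ⊆ ℝ^d be a finite set with H ⊆ ⋃_{i=1}^k G_i and span(H) = span(G_i) for every i (in particular all spans coincide). Then (relint(cone(H)) ∪ {0}) + ∑_{i=1}^k (relint(cone(G_i)) ∪ {0}) = ∑_{i=1}^k (relint(cone(G_i)) ∪ {0}), where + denotes Minkowski sum. (Lemma 7, geometric form: a cycle whose support is covered by other cycles of the same span is redundant.) -/

import Mathlib

open Pointwise

/-- The convex cone of a finite set `G ⊆ ℝ^d`: all nonnegative combinations
of elements of `G`. -/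
def coneF {d : ℕ} (G : Finset (Fin d → ℝ)) : Set (Fin d → ℝ) :=
  {x | ∃ a : (Fin d → ℝ) → ℝ, (∀ v ∈ G, 0 ≤ a v) ∧ x = ∑ v ∈ G, a v • v}


lemma coneF_zero {d : ℕ} (G : Finset (Fin d → ℝ)) : (0 : Fin d → ℝ) ∈ coneF G :=
  ⟨0, by simp, by simp⟩

lemma coneF_add {d : ℕ} {G : Finset (Fin d → ℝ)} {x y : Fin d → ℝ}
    (hx : x ∈ coneF G) (hy : y ∈ coneF G) : x + y ∈ coneF G := by
  obtain ⟨a, ha, rfl⟩ := hx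
  obtain ⟨b, hb, rfl⟩ := hy
  refine ⟨a + b, fun v hv => add_nonneg (ha v hv) (hb v hv), ?_⟩
  simp [add_smul, Finset.sum_add_distrib]

lemma coneF_smul {d : ℕ} {G : Finset (Fin d → ℝ)} {x : Fin d → ℝ} {t : ℝ} (ht : 0 ≤ t)
    (hx : x ∈ coneF G) : t • x ∈ coneF G := by
  obtain ⟨a, ha, rfl⟩ := hx
  refine ⟨t • a, fun v hv => mul_nonneg ht (ha v hv), ?_⟩
  simp [Finset.smul_sum, smul_smul]

lemma coneF_mem {d : ℕ} {G : Finset (Fin d → ℝ)} {x : Fin d → ℝ}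
    (hx : x ∈ G) : x ∈ coneF G := by
  classical
  refine ⟨fun v => if v = x then 1 else 0, fun v _ => by dsimp only; split_ifs <;> norm_num, ?_⟩
  simp [ite_smul, Finset.sum_ite_eq', hx]

lemma coneF_sum {d : ℕ} {G : Finset (Fin d → ℝ)} {ι : Type*} (s : Finset ι)
    (f : ι → Fin d → ℝ) (h : ∀ i ∈ s, f i ∈ coneF G) : ∑ i ∈ s, f i ∈ coneF G := by
  classical
  induction s using Finset.induction_on with
  | empty => simpa using coneF_zero G
  | insert a s ha ih =>
    rw [Finset.sum_insert ha]
    exact coneF_add (h a (by simp)) (ih fun i hi => h i (by simp [hi]))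

lemma coneF_convex {d : ℕ} (G : Finset (Fin d → ℝ)) : Convex ℝ (coneF G) := by
  intro x hx y hy a b ha hb _
  exact coneF_add (coneF_smul ha hx) (coneF_smul hb hy)

lemma coneF_span {d : ℕ} (G : Finset (Fin d → ℝ)) :
    Submodule.span ℝ (coneF G) = Submodule.span ℝ (G : Set (Fin d → ℝ)) := by
  apply le_antisymm
  · rw [Submodule.span_le]
    rintro x ⟨a, _, rfl⟩
    exact Submodule.sum_mem _ fun v hv => Submodule.smul_mem _ _ (Submodule.subset_span hv)
  · exact Submodule.span_mono fun x hx => coneF_mem hx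

lemma coneF_affineSpan {d : ℕ} (G : Finset (Fin d → ℝ)) (x : Fin d → ℝ) :
    x ∈ affineSpan ℝ (coneF G) ↔ x ∈ Submodule.span ℝ (G : Set (Fin d → ℝ)) := by
  have h := affineSpan_insert_zero (k := ℝ) (coneF G)
  rw [Set.insert_eq_of_mem (coneF_zero G), coneF_span] at h
  exact Set.ext_iff.1 h x

lemma mem_relint {d : ℕ} (G : Finset (Fin d → ℝ)) (x : Fin d → ℝ) :
    x ∈ intrinsicInterior ℝ (coneF G) ↔ x ∈ Submodule.span ℝ (G : Set (Fin d → ℝ)) ∧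
      ∃ δ > 0, ∀ y ∈ Submodule.span ℝ (G : Set (Fin d → ℝ)), dist y x < δ → y ∈ coneF G := by
  rw [mem_intrinsicInterior]
  constructor
  · rintro ⟨⟨z, hz⟩, h, rfl⟩
    rw [mem_interior_iff_mem_nhds, Metric.mem_nhds_iff] at h
    obtain ⟨δ, hδ, h⟩ := h
    refine ⟨(coneF_affineSpan G z).1 hz, δ, hδ, fun y hy hd => ?_⟩
    exact @h ⟨y, (coneF_affineSpan G y).2 hy⟩ hd
  · rintro ⟨hx, δ, hδ, h⟩
    refine ⟨⟨x, (coneF_affineSpan G x).2 hx⟩, ?_, rfl⟩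
    rw [mem_interior_iff_mem_nhds, Metric.mem_nhds_iff]
    exact ⟨δ, hδ, fun y hy => h y ((coneF_affineSpan G y).1 y.2) hy⟩

lemma coneF_sub_span {d : ℕ} {G : Finset (Fin d → ℝ)} {x : Fin d → ℝ} (hx : x ∈ coneF G) :
    x ∈ Submodule.span ℝ (G : Set (Fin d → ℝ)) := by
  rw [← coneF_span]; exact Submodule.subset_span hx

lemma relint_add {d : ℕ} {G : Finset (Fin d → ℝ)} {p c : Fin d → ℝ} {ε : ℝ} (hε : 0 < ε)
    (hp : p ∈ intrinsicInterior ℝ (coneF G)) (hc : c ∈ coneF G) :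
    c + ε • p ∈ intrinsicInterior ℝ (coneF G) := by
  rw [mem_relint] at hp ⊢
  obtain ⟨hpL, δ, hδ, h⟩ := hp
  have hcL := coneF_sub_span hc
  refine ⟨Submodule.add_mem _ hcL (Submodule.smul_mem _ _ hpL), ε * δ, by positivity,
    fun y hy hd => ?_⟩
  have key : y = c + ε • (ε⁻¹ • (y - c)) := by
    rw [smul_smul, mul_inv_cancel₀ hε.ne', one_smul]; abel
  rw [key]
  refine coneF_add hc (coneF_smul hε.le (h _ (Submodule.smul_mem _ _ (Submodule.sub_mem _ hy hcL)) ?_))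
  have e2 : ε⁻¹ • (y - c) - p = ε⁻¹ • (y - (c + ε • p)) := by
    rw [← sub_sub, smul_sub _ (y - c), smul_smul, inv_mul_cancel₀ hε.ne', one_smul]
  rw [dist_eq_norm] at hd ⊢
  rw [e2, norm_smul, Real.norm_of_nonneg (by positivity), inv_mul_lt_iff₀ hε]
  exact hd

lemma relint_sub {d : ℕ} {G : Finset (Fin d → ℝ)} {h p : Fin d → ℝ}
    (hh : h ∈ intrinsicInterior ℝ (coneF G))
    (hp : p ∈ Submodule.span ℝ (G : Set (Fin d → ℝ))) :
    ∃ ε > 0, h - (ε : ℝ) • p ∈ coneF G := by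
  rw [mem_relint] at hh
  obtain ⟨hL, δ, hδ, H⟩ := hh
  have hpos : 0 < ‖p‖ + 1 := by positivity
  refine ⟨δ / (‖p‖ + 1), by positivity,
    H _ (Submodule.sub_mem _ hL (Submodule.smul_mem _ _ hp)) ?_⟩
  rw [dist_eq_norm, sub_sub_cancel_left, norm_neg, norm_smul,
    Real.norm_of_nonneg (by positivity), div_mul_eq_mul_div, div_lt_iff₀ hpos]
  nlinarith

lemma coneF_decomp {d k : ℕ} (G : Fin k → Finset (Fin d → ℝ)) (H : Finset (Fin d → ℝ))
    (hsub : (H : Set (Fin d → ℝ)) ⊆ ⋃ i : Fin k, (G i : Set (Fin d → ℝ)))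
    {x : Fin d → ℝ} (hx : x ∈ coneF H) :
    ∃ c : Fin k → Fin d → ℝ, (∀ i, c i ∈ coneF (G i)) ∧ ∑ i, c i = x := by
  classical
  obtain ⟨a, ha, rfl⟩ := hx
  have hex : ∀ v : H, ∃ i, v.1 ∈ G i := fun v => by simpa using hsub v.2
  choose f hf using hex
  refine ⟨fun i => ∑ v : H, if f v = i then a v.1 • v.1 else 0, fun i => ?_, ?_⟩
  · refine coneF_sum _ _ fun v _ => ?_
    split_ifs with hi
    · exact coneF_smul (ha _ v.2) (coneF_mem (hi ▸ hf v))
    · exact coneF_zero _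
  · rw [Finset.sum_comm]
    simp only [Finset.sum_ite_eq, Finset.mem_univ, if_true]
    exact Finset.sum_coe_sort H (fun v => a v • v)

/-- Lemma 7, geometric form. Let `k ≥ 1`, let
`G₁, …, G_k ⊆ ℝ^d` be finite sets and let `H ⊆ ⋃ᵢ Gᵢ` be a finite set with
`span(H) = span(Gᵢ)` for every `i`. Then adding the summand
`relint(cone(H)) ∪ {0}` to the iterated Minkowski sum of the sets
`relint(cone(Gᵢ)) ∪ {0}` does not change it. -/
theorem redundant_cycle_cone (d k : ℕ) (hd : 1 ≤ d) (hk : 1 ≤ k)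
    (G : Fin k → Finset (Fin d → ℝ)) (H : Finset (Fin d → ℝ))
    (hsub : (H : Set (Fin d → ℝ)) ⊆ ⋃ i : Fin k, (G i : Set (Fin d → ℝ)))
    (hspan : ∀ i : Fin k,
      Submodule.span ℝ (H : Set (Fin d → ℝ)) =
        Submodule.span ℝ (G i : Set (Fin d → ℝ))) :
    (intrinsicInterior ℝ (coneF H) ∪ {0}) +
        ∑ i : Fin k, (intrinsicInterior ℝ (coneF (G i)) ∪ {0}) =
      ∑ i : Fin k, (intrinsicInterior ℝ (coneF (G i)) ∪ {0}) := by
  apply Set.Subset.antisymm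
  · rintro _ ⟨h, hh, x, hx, rfl⟩
    rcases hh with hh | hh
    swap
    · rw [Set.mem_singleton_iff] at hh
      subst hh
      simpa using hx
    rw [Set.mem_fintype_sum] at hx ⊢
    obtain ⟨g, hg, rfl⟩ := hx
    have hgC : ∀ i, g i ∈ coneF (G i) := fun i => by
      rcases hg i with h1 | h1
      · exact intrinsicInterior_subset h1
      · rw [Set.mem_singleton_iff] at h1
        rw [h1]; exact coneF_zero _
    have hne : ∀ i, (intrinsicInterior ℝ (coneF (G i))).Nonempty := fun i =>
      Set.Nonempty.intrinsicInterior (coneF_convex _) ⟨0, coneF_zero _⟩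
    choose p hp using hne
    have hpL : ∑ i, p i ∈ Submodule.span ℝ (H : Set (Fin d → ℝ)) :=
      Submodule.sum_mem _ fun i _ => by
        rw [hspan i]; exact coneF_sub_span (intrinsicInterior_subset (hp i))
    obtain ⟨ε, hε, hm⟩ := relint_sub hh hpL
    obtain ⟨c, hc, hcs⟩ := coneF_decomp G H hsub hm
    refine ⟨fun i => (c i + g i) + ε • p i, fun i =>
      Or.inl (relint_add hε (hp i) (coneF_add (hc i) (hgC i))), ?_⟩
    rw [Finset.sum_add_distrib, Finset.sum_add_distrib, hcs, ← Finset.smul_sum]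
    simp only []
    abel
  · intro x hx
    exact ⟨0, Or.inr rfl, x, hx, zero_add x⟩
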